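/- arXiv:2507.12560 — 2 statements merged into one kernel-verified Lean document; each statement's English description precedes it below -/
import Mathlib

section
/- Every real n×n matrix Φ with det Φ > 0 can be written as a product of five symmetric positive definite real n×n matrices, Φ = M₅ M₄ M₃ M₂ M₁. -/
/-!
A matrix similar to a diagonal matrix with positive diagonal is a product of two positive definite
matrices, since `S * D * S⁻¹ = (S * Sᴴ) * (S⁻ᴴ * D * S⁻¹)`. By Sourour's theorem an invertible
nonscalar matrix is a product of two matrices with arbitrarily prescribed eigenvalues, subject only
to the determinant. Prescribing distinct positive eigenvalues makes both factors diagonalizable, so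
that a nonscalar matrix with positive determinant is a product of four positive definite matrices.
For a scalar matrix, a nonscalar positive definite fifth factor reduces to that case.

Sourour's theorem is proved by induction on the size. Up to similarity, the top left entry of a
nonscalar matrix can be chosen to be the product of the first two prescribed eigenvalues, and the
Schur complement of this entry can be kept nonscalar; a factorization of the Schur complement then
extends to a block triangular factorization of the whole matrix.
-/

namespace Ballantine

open Matrix Polynomial

variable {m u k : Type*} [Fintype m] [DecidableEq m] [Fintype u] [DecidableEq u] [Fintype k]
  [DecidableEq k]

section Similarity

theorem mem_range_scalar_of_pairwise {R : Type*} [Semiring R] {A : Matrix m m R}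
    (hA : Pairwise fun i j => A i j = 0 ∧ A i i = A j j) : A ∈ Set.range (scalar m) := by
  rcases isEmpty_or_nonempty m with _ | ⟨⟨i₀⟩⟩
  · exact ⟨0, Subsingleton.elim _ _⟩
  refine ⟨A i₀ i₀, ?_⟩
  ext i j
  rcases eq_or_ne i j with rfl | hij
  · rcases eq_or_ne i₀ i with rfl | hi
    · simp
    · simp [(hA hi).2]
  · simp [hij, (hA hij).1]

theorem notMem_range_scalar_of_apply_ne_zero {R : Type*} [Semiring R] {A : Matrix m m R} {i j : m}
    (hij : i ≠ j) (h : A i j ≠ 0) : A ∉ Set.range (scalar m) := by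
  rintro ⟨c, rfl⟩
  simp [hij] at h

theorem det_eq_of_isConj {R : Type*} [CommRing R] {A B : Matrix m m R} (h : IsConj A B) :
    A.det = B.det :=
  isConj_iff_eq.mp (detMonoidHom.map_isConj h)

theorem exists_isConj_apply_ne_zero {R : Type*} [CommRing R] {A : Matrix m m R}
    (hA : A ∉ Set.range (scalar m)) : ∃ B i j, IsConj A B ∧ i ≠ j ∧ B i j ≠ 0 := by
  by_contra! hdiag
  refine hA (mem_range_scalar_of_pairwise fun i j hij => ⟨hdiag A i j (.refl A) hij, ?_⟩)
  let T : (Matrix m m R)ˣ :=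
    ⟨transvection i j 1, transvection i j (-1),
      by simp [transvection_mul_transvection_same, hij],
      by simp [transvection_mul_transvection_same, hij]⟩
  have hT : ((T : Matrix m m R) * A * (T⁻¹ : (Matrix m m R)ˣ)) i j = 0 :=
    hdiag _ i j ⟨T, Units.mk_semiconjBy T A⟩ hij
  have hji : A j i = 0 := hdiag A j i (.refl A) hij.symm
  have hAij : A i j = 0 := hdiag A i j (.refl A) hij
  simpa [T, Units.inv_mk, hji, hAij, add_neg_eq_zero, eq_comm] using hT

theorem isConj_fromBlocks {R : Type*} [Ring R] (a : Matrix u u R) (r : Matrix u k R)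
    (s : Matrix k u R) (D : Matrix k k R) (q : Matrix u k R) :
    IsConj (fromBlocks a r s D)
      (fromBlocks (a + q * s) (r + q * D - (a + q * s) * q) s (D - s * q)) := by
  let U : (Matrix (u ⊕ k) (u ⊕ k) R)ˣ :=
    ⟨fromBlocks 1 q 0 1, fromBlocks 1 (-q) 0 1, by simp [fromBlocks_multiply],
      by simp [fromBlocks_multiply]⟩
  exact ⟨U, by simp [U, SemiconjBy, fromBlocks_multiply]⟩

end Similarity

section SchurComplement

variable {K : Type*} [Field K]

-- A matrix with invertible corner `c • 1` is written `fromBlocks (c • 1) r s (C + c⁻¹ • (s * r))`,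
-- so that `C` is the Schur complement of the corner.
omit [DecidableEq k] in
theorem fromBlocks_smul_one_eq_mul {b c : K} (hb : b ≠ 0) (hc : c ≠ 0) (r : Matrix u k K)
    (s : Matrix k u K) (X Y : Matrix k k K) :
    fromBlocks ((b * c) • 1) r s (X * Y + (b * c)⁻¹ • (s * r)) =
      fromBlocks (b • 1) 0 (c⁻¹ • s) X * fromBlocks (c • 1) (b⁻¹ • r) 0 Y := by
  simp [fromBlocks_multiply, smul_smul, hb, hc, mul_comm, add_comm]

theorem det_fromBlocks_smul_one {c : K} (hc : c ≠ 0) (r : Matrix u k K) (s : Matrix k u K)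
    (C : Matrix k k K) :
    (fromBlocks (c • 1) r s (C + c⁻¹ • (s * r))).det = c ^ Fintype.card u * C.det := by
  have h := fromBlocks_smul_one_eq_mul hc one_ne_zero r s 1 C
  rw [mul_one, Matrix.one_mul] at h
  rw [h, det_mul, det_fromBlocks_zero₁₂, det_fromBlocks_zero₂₁]
  simp

theorem exists_isConj_fromBlocks_smul_one [Unique u] (c : K) (a : Matrix u u K) (r : Matrix u k K)
    {s : Matrix k u K} {i : k} (hi : s i default ≠ 0) (D : Matrix k k K) :
    ∃ r' D', IsConj (fromBlocks a r s D) (fromBlocks (c • 1) r' s D') := by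
  let q : Matrix u k K := single default i ((c - a default default) / s i default)
  have hq : a + q * s = c • 1 := by
    ext x y
    rw [Unique.eq_default x, Unique.eq_default y]
    simp [q, hi]
  exact ⟨_, _, hq ▸ isConj_fromBlocks a r s D q⟩

theorem isConj_fromBlocks_smul_one_of_mul_eq_zero {c : K} (hc : c ≠ 0) (r : Matrix u k K)
    (s : Matrix k u K) (C : Matrix k k K) {q : Matrix u k K} (hq : q * s = 0) :
    ∃ r', IsConj (fromBlocks (c • 1) r s (C + c⁻¹ • (s * r)))
      (fromBlocks (c • 1) r' s (C - c⁻¹ • (s * q * C) + c⁻¹ • (s * r'))) := by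
  refine ⟨r + q * C - c • q, ?_⟩
  convert isConj_fromBlocks (c • 1) r s (C + c⁻¹ • (s * r)) q using 2
  · simp [hq]
  · simp [hq, Matrix.mul_add, ← Matrix.mul_assoc]
  · simp only [Matrix.mul_add, Matrix.mul_sub, Matrix.mul_smul, smul_add, smul_sub, smul_smul,
      inv_mul_cancel₀ hc, one_smul, Matrix.mul_assoc]
    abel

omit [DecidableEq u] [DecidableEq k] in
theorem exists_mul_eq_zero_mul_apply_ne_zero {R : Type*} [CommRing R] [NoZeroDivisors R]
    [Nontrivial k] [Unique u] {s : Matrix k u R} {i : k} (hi : s i default ≠ 0) :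
    ∃ (q : Matrix u k R) (j : k), q * s = 0 ∧ i ≠ j ∧ (s * q) i j ≠ 0 := by
  classical
  obtain ⟨j, hji⟩ := exists_ne i
  refine ⟨replicateRow u (Pi.single i (s j default) - Pi.single j (s i default)), j, ?_,
    hji.symm, ?_⟩
  · ext x y
    rw [Unique.eq_default x, Unique.eq_default y]
    simp [mul_apply, sub_mul, Finset.sum_sub_distrib, Pi.single_apply, mul_comm (s j default)]
  · simp [mul_apply, hji, hi]

theorem exists_isConj_fromBlocks_notMem_range_scalar [Nontrivial k] [Unique u] {c : K}
    (hc : c ≠ 0) (r : Matrix u k K) {s : Matrix k u K} {i : k} (hi : s i default ≠ 0)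
    {C : Matrix k k K} (hC : C ≠ 0) :
    ∃ r' C', IsConj (fromBlocks (c • 1) r s (C + c⁻¹ • (s * r)))
      (fromBlocks (c • 1) r' s (C' + c⁻¹ • (s * r'))) ∧ C' ∉ Set.range (scalar k) := by
  by_cases hscalar : C ∈ Set.range (scalar k)
  · obtain ⟨a, rfl⟩ := hscalar
    have ha : a ≠ 0 := by
      rintro rfl
      simp at hC
    obtain ⟨q, j, hqs, hij, hsq⟩ := exists_mul_eq_zero_mul_apply_ne_zero hi
    obtain ⟨r', hconj⟩ := isConj_fromBlocks_smul_one_of_mul_eq_zero hc r s (scalar k a) hqs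
    refine ⟨r', _, hconj, notMem_range_scalar_of_apply_ne_zero hij ?_⟩
    simp [hij, hsq, hc, ha]
  · exact ⟨r, C, .refl _, hscalar⟩

theorem exists_isConj_fromBlocks_schur [Unique u] {c : K} (hc : c ≠ 0) (a : Matrix u u K)
    (r : Matrix u k K) {s : Matrix k u K} {i : k} (hi : s i default ≠ 0) (D : Matrix k k K)
    (hdet : (fromBlocks a r s D).det ≠ 0) :
    ∃ r' C, IsConj (fromBlocks a r s D) (fromBlocks (c • 1) r' s (C + c⁻¹ • (s * r'))) ∧
      (C ∈ Set.range (scalar k) → Subsingleton k) := by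
  obtain ⟨r₁, D₁, h₁⟩ := exists_isConj_fromBlocks_smul_one c a r hi D
  rw [← sub_add_cancel D₁ (c⁻¹ • (s * r₁))] at h₁
  rcases subsingleton_or_nontrivial k with hk | hk
  · exact ⟨r₁, _, h₁, fun _ => hk⟩
  rw [det_eq_of_isConj h₁, det_fromBlocks_smul_one hc] at hdet
  have hC₁ : D₁ - c⁻¹ • (s * r₁) ≠ 0 := fun h => by simp [h] at hdet
  obtain ⟨r₂, C, h₂, hC⟩ := exists_isConj_fromBlocks_notMem_range_scalar hc r₁ hi hC₁
  exact ⟨r₂, C, h₁.trans h₂, fun h => absurd h hC⟩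

end SchurComplement

section Sourour

variable {K : Type*} [Field K]

/-- `HasCharpolyFactorization A p q` means that `A` is a product of two matrices with
characteristic polynomials `p` and `q`, in this order. It expresses prescribed eigenvalues (with
multiplicity) of the two factors. -/
def HasCharpolyFactorization {R : Type*} [CommRing R] (A : Matrix m m R) (p q : R[X]) : Prop :=
  ∃ X Y : Matrix m m R, A = X * Y ∧ X.charpoly = p ∧ Y.charpoly = q

namespace HasCharpolyFactorization

theorem of_isConj {R : Type*} [CommRing R] {A B : Matrix m m R} {p q : R[X]}
    (hA : HasCharpolyFactorization A p q) (hAB : IsConj A B) : HasCharpolyFactorization B p q := by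
  obtain ⟨S, hS⟩ := hAB
  obtain ⟨X, Y, rfl, hX, hY⟩ := hA
  let T : Matrix m m R := ↑S⁻¹
  have hB : B = S * (X * Y) * T := (Units.eq_mul_inv_iff_mul_eq S).mpr hS.eq.symm
  refine ⟨S * X * T, S * Y * T, by simp [hB, T, mul_assoc], by simp [T, hX],
    by simp [T, hY]⟩

theorem reindex {R : Type*} [CommRing R] {A : Matrix m m R} {p q : R[X]}
    (hA : HasCharpolyFactorization A p q) (e : m ≃ k) :
    HasCharpolyFactorization (Matrix.reindex e e A) p q := by
  obtain ⟨X, Y, rfl, hX, hY⟩ := hA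
  exact ⟨Matrix.reindex e e X, Matrix.reindex e e Y, map_mul (reindexAlgEquiv R R e) X Y,
    by rw [charpoly_reindex, hX], by rw [charpoly_reindex, hY]⟩

theorem fromBlocks {C : Matrix k k K} {p q : K[X]} (hC : HasCharpolyFactorization C p q) {b c : K}
    (hb : b ≠ 0) (hc : c ≠ 0) (r : Matrix u k K) (s : Matrix k u K) :
    HasCharpolyFactorization
      (Matrix.fromBlocks ((b * c) • 1) r s (C + (b * c)⁻¹ • (s * r)))
      ((X - Polynomial.C b) ^ Fintype.card u * p) ((X - Polynomial.C c) ^ Fintype.card u * q) := by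
  obtain ⟨X, Y, rfl, rfl, rfl⟩ := hC
  refine ⟨_, _, fromBlocks_smul_one_eq_mul hb hc r s X Y, ?_, ?_⟩
  · rw [charpoly_fromBlocks_zero₁₂, smul_one_eq_diagonal, charpoly_diagonal, Finset.prod_const,
      Finset.card_univ]
  · rw [charpoly_fromBlocks_zero₂₁, smul_one_eq_diagonal, charpoly_diagonal, Finset.prod_const,
      Finset.card_univ]

end HasCharpolyFactorization

theorem hasCharpolyFactorization_of_subsingleton {R : Type*} [CommRing R] [Subsingleton m]
    (A : Matrix m m R) (β γ : m → R) (hdet : (∏ i, β i) * ∏ i, γ i = A.det) :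
    HasCharpolyFactorization A (∏ i, (X - C (β i))) (∏ i, (X - C (γ i))) := by
  refine ⟨diagonal β, diagonal γ, ?_, charpoly_diagonal β, charpoly_diagonal γ⟩
  ext i j
  obtain rfl := Subsingleton.elim i j
  rw [← det_eq_elem_of_subsingleton A, ← hdet, ← det_diagonal, ← det_diagonal, ← det_mul,
    det_eq_elem_of_subsingleton _ i]

theorem hasCharpolyFactorization_of_det_eq_prod_mul_prod (A : Matrix m m K)
    (hA : A ∈ Set.range (scalar m) → Subsingleton m) (hA₀ : A.det ≠ 0) (β γ : m → K)
    (hdet : (∏ i, β i) * ∏ i, γ i = A.det) :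
    HasCharpolyFactorization A (∏ i, (X - C (β i))) (∏ i, (X - C (γ i))) := by
  induction hn : Fintype.card m using Nat.strong_induction_on generalizing m with
  | h n ih =>
  rcases subsingleton_or_nontrivial m with _ | hm
  · exact hasCharpolyFactorization_of_subsingleton A β γ hdet
  obtain ⟨B, i, j, hAB, hij, hBij⟩ :=
    exists_isConj_apply_ne_zero fun h => not_subsingleton m (hA h)
  let e : {x // x = j} ⊕ {x // x ≠ j} ≃ m := Equiv.sumCompl (· = j)
  let M := Matrix.reindex e.symm e.symm B
  have hMB : Matrix.reindex e e M = B := by simp [M]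
  have hMA : M.det = A.det := by rw [det_reindex_self, det_eq_of_isConj hAB]
  rw [Fintype.prod_eq_mul_prod_subtype_ne β j, Fintype.prod_eq_mul_prod_subtype_ne γ j,
    mul_mul_mul_comm] at hdet
  have hβγ : β j * γ j ≠ 0 := left_ne_zero_of_mul (hdet ▸ hA₀)
  obtain ⟨r, C, hMC, hC⟩ := exists_isConj_fromBlocks_schur hβγ M.toBlocks₁₁ M.toBlocks₁₂
    (s := M.toBlocks₂₁) (i := ⟨i, hij⟩) hBij M.toBlocks₂₂
    (by rwa [fromBlocks_toBlocks, hMA])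
  rw [fromBlocks_toBlocks] at hMC
  have hdetC : (β j * γ j) * C.det = A.det := by
    rw [← hMA, det_eq_of_isConj hMC, det_fromBlocks_smul_one hβγ, Fintype.card_unique, pow_one]
  have hfac := ih _ (hn ▸ Fintype.card_subtype_lt (x := j) (by simp)) C hC
    (right_ne_zero_of_mul (hdetC ▸ hA₀)) (fun x => β x) (fun x => γ x)
    (mul_left_cancel₀ hβγ (hdet.trans hdetC.symm)) rfl
  have hM := (hfac.fromBlocks (left_ne_zero_of_mul hβγ) (right_ne_zero_of_mul hβγ) r
    M.toBlocks₂₁).of_isConj hMC.symm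
  rw [Fintype.card_unique, pow_one, pow_one] at hM
  rw [Fintype.prod_eq_mul_prod_subtype_ne _ j, Fintype.prod_eq_mul_prod_subtype_ne _ j]
  exact (hMB ▸ hM.reindex e).of_isConj hAB.symm

end Sourour

section Diagonalization

theorem isConj_diagonal_of_charpoly_eq_prod {K : Type*} [Field K] {A : Matrix m m K} {d : m → K}
    (hd : Function.Injective d) (hA : A.charpoly = ∏ i, (X - C (d i))) :
    IsConj (diagonal d) A := by
  have heigen (i : m) : ∃ v, Module.End.HasEigenvector (toLin' A) (d i) v := by
    refine Module.End.HasEigenvalue.exists_hasEigenvector ?_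
    rw [Module.End.hasEigenvalue_iff_isRoot_charpoly, charpoly_toLin', hA, isRoot_prod]
    exact ⟨i, Finset.mem_univ i, root_X_sub_C.mpr rfl⟩
  choose v hv using heigen
  let S : Matrix m m K := of fun i j => v j i
  have hS : IsUnit S :=
    linearIndependent_cols_iff_isUnit.mp
      (Module.End.eigenvectors_linearIndependent' (toLin' A) d hd v hv)
  refine ⟨hS.unit, ?_⟩
  ext i j
  have hAv : A *ᵥ v j = d j • v j := (hv j).apply_eq_smul
  calc (S * diagonal d) i j = d j * v j i := by simp [S, mul_comm]
    _ = (A *ᵥ v j) i := by rw [hAv, Pi.smul_apply, smul_eq_mul]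

end Diagonalization

section PosDef

variable {R : Type*} [CommRing R] [PartialOrder R] [StarRing R] [StarOrderedRing R]
  [NoZeroDivisors R]

theorem exists_posDef_mul_posDef_of_isConj_diagonal {A : Matrix m m R} {d : m → R}
    (hd : ∀ i, 0 < d i) (hA : IsConj (diagonal d) A) :
    ∃ P Q : Matrix m m R, P.PosDef ∧ Q.PosDef ∧ A = P * Q := by
  obtain ⟨S, hS⟩ := hA
  let T : Matrix m m R := ↑S⁻¹
  have hST : (S : Matrix m m R)ᴴ * Tᴴ = 1 := by
    rw [← conjTranspose_mul, S.inv_mul, conjTranspose_one]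
  refine ⟨S * (S : Matrix m m R)ᴴ, Tᴴ * diagonal d * T,
    .mul_conjTranspose_self _ (vecMul_injective_of_isUnit S.isUnit),
    (PosDef.diagonal hd).conjTranspose_mul_mul_same (mulVec_injective_of_isUnit S⁻¹.isUnit), ?_⟩
  calc A = S * diagonal d * T := (Units.eq_mul_inv_iff_mul_eq S).mpr hS.eq.symm
    _ = S * ((S : Matrix m m R)ᴴ * Tᴴ) * diagonal d * T := by rw [hST, Matrix.mul_one]
    _ = _ := by simp only [Matrix.mul_assoc]

theorem exists_posDef_mul_notMem_range_scalar [Nontrivial m] {A : Matrix m m R} (hA : A ≠ 0) :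
    ∃ P : Matrix m m R, P.PosDef ∧ P * A ∉ Set.range (scalar m) := by
  by_cases hscalar : A ∈ Set.range (scalar m)
  · obtain ⟨c, rfl⟩ := hscalar
    have hc : c ≠ 0 := by
      rintro rfl
      simp at hA
    have := nontrivial_of_ne c 0 hc
    obtain ⟨i, j, hij⟩ := exists_pair_ne m
    refine ⟨diagonal (Function.update 1 i 2), .diagonal fun k => ?_, ?_⟩
    · rcases eq_or_ne k i with rfl | hk
      · simp
      · simp [hk]
    · rintro ⟨b, hb⟩
      have hi := congr_fun₂ hb i i
      have hj := congr_fun₂ hb j j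
      simp only [scalar_apply, diagonal_mul_diagonal, diagonal_apply_eq, Function.update_self,
        Function.update_of_ne hij.symm, Pi.one_apply] at hi hj
      exact hc (by linear_combination hj - hi)
  · exact ⟨1, .one, by rwa [Matrix.one_mul]⟩

theorem posDef_of_subsingleton_of_det_pos [Subsingleton m] {A : Matrix m m R} (hA : 0 < A.det) :
    A.PosDef := by
  have : A = diagonal fun _ => A.det := by
    ext i j
    obtain rfl := Subsingleton.elim i j
    rw [diagonal_apply_eq, det_eq_elem_of_subsingleton]
  rw [this]
  exact .diagonal fun _ => hA

end PosDef

section RCLike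

open scoped ComplexOrder

variable {𝕜 : Type*} [RCLike 𝕜]

omit [DecidableEq m] in
theorem exists_injective_pos_prod_mul_prod_eq [Nonempty m] {x : ℝ} (hx : 0 < x) :
    ∃ β γ : m → ℝ, Function.Injective β ∧ Function.Injective γ ∧ (∀ i, 0 < β i) ∧ (∀ i, 0 < γ i) ∧
      (∏ i, β i) * ∏ i, γ i = x := by
  let γ (i : m) : ℝ := Fintype.equivFin m i + 1
  have hγ : Function.Injective γ := fun i j h => by simpa [γ, Fin.val_inj] using h
  have hγ₀ (i : m) : 0 < γ i := by positivity
  let y : ℝ := x / (∏ i, γ i) ^ 2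
  have hy : 0 < y := by positivity
  let t : ℝ := y ^ (Fintype.card m : ℝ)⁻¹
  have ht : 0 < t := by positivity
  refine ⟨fun i => t * γ i, γ, (mul_right_injective₀ ht.ne').comp hγ, hγ,
    fun i => mul_pos ht (hγ₀ i), hγ₀, ?_⟩
  rw [Finset.prod_mul_distrib, Finset.prod_const, Finset.card_univ,
    Real.rpow_inv_natCast_pow hy.le Fintype.card_ne_zero]
  have : ∏ i, γ i ≠ 0 := (Finset.prod_pos fun i _ => hγ₀ i).ne'
  simp only [y]
  field_simp

theorem exists_four_posDef_of_notMem_range_scalar {A : Matrix m m 𝕜}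
    (hA : A ∉ Set.range (scalar m)) (hdet : 0 < A.det) :
    ∃ P₁ P₂ P₃ P₄ : Matrix m m 𝕜,
      P₁.PosDef ∧ P₂.PosDef ∧ P₃.PosDef ∧ P₄.PosDef ∧ A = P₄ * P₃ * P₂ * P₁ := by
  have : Nonempty m := by
    by_contra! h
    exact hA ⟨0, Subsingleton.elim _ _⟩
  obtain ⟨x, hx, hxA⟩ := RCLike.pos_iff_exists_ofReal.mp hdet
  obtain ⟨β, γ, hβ, hγ, hβ₀, hγ₀, hβγ⟩ := exists_injective_pos_prod_mul_prod_eq (m := m) hx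
  obtain ⟨X, Y, rfl, hX, hY⟩ :=
    hasCharpolyFactorization_of_det_eq_prod_mul_prod A (fun h => absurd h hA) hdet.ne'
      (fun i => (β i : 𝕜)) (fun i => (γ i : 𝕜)) (by rw [← hxA, ← hβγ]; push_cast; rfl)
  obtain ⟨P₄, P₃, h₄, h₃, rfl⟩ := exists_posDef_mul_posDef_of_isConj_diagonal
    (fun i => RCLike.ofReal_pos.mpr (hβ₀ i))
    (isConj_diagonal_of_charpoly_eq_prod (RCLike.ofReal_injective.comp hβ) hX)
  obtain ⟨P₂, P₁, h₂, h₁, rfl⟩ := exists_posDef_mul_posDef_of_isConj_diagonal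
    (fun i => RCLike.ofReal_pos.mpr (hγ₀ i))
    (isConj_diagonal_of_charpoly_eq_prod (RCLike.ofReal_injective.comp hγ) hY)
  exact ⟨P₁, P₂, P₃, P₄, h₁, h₂, h₃, h₄, by simp only [Matrix.mul_assoc]⟩

end RCLike

end Ballantine

open Ballantine in
open scoped ComplexOrder in
theorem factorization_into_five_posDef_general {𝕜 m : Type*} [RCLike 𝕜] [Fintype m] [DecidableEq m]
    (Φ : Matrix m m 𝕜) (hΦ : 0 < Φ.det) :
    ∃ M₁ M₂ M₃ M₄ M₅ : Matrix m m 𝕜,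
      M₁.PosDef ∧ M₂.PosDef ∧ M₃.PosDef ∧ M₄.PosDef ∧ M₅.PosDef ∧
      Φ = M₅ * M₄ * M₃ * M₂ * M₁ := by
  rcases subsingleton_or_nontrivial m with _ | _
  · exact ⟨Φ, 1, 1, 1, 1, posDef_of_subsingleton_of_det_pos hΦ, .one, .one, .one, .one, by simp⟩
  have hΦ₀ : Φ ≠ 0 := by
    rintro rfl
    simp at hΦ
  obtain ⟨P, hP, hPΦ⟩ := exists_posDef_mul_notMem_range_scalar hΦ₀
  obtain ⟨M₁, M₂, M₃, M₄, h₁, h₂, h₃, h₄, hM⟩ :=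
    exists_four_posDef_of_notMem_range_scalar hPΦ (by
      rw [Matrix.det_mul]
      exact mul_pos hP.det_pos hΦ)
  refine ⟨M₁, M₂, M₃, M₄, P⁻¹, h₁, h₂, h₃, h₄, hP.inv, ?_⟩
  calc Φ = P⁻¹ * (P * Φ) := (Matrix.nonsing_inv_mul_cancel_left P Φ hP.det_pos.ne'.isUnit).symm
    _ = P⁻¹ * M₄ * M₃ * M₂ * M₁ := by rw [hM]; simp only [Matrix.mul_assoc]

/-- **Ballantine's factorization theorem.** Every real `n × n` matrix `Φ` with
`det Φ > 0` can be written as a product of five symmetric positive definite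
real `n × n` matrices, `Φ = M₅ * M₄ * M₃ * M₂ * M₁`. -/
theorem factorization_into_five_posDef {n : ℕ} (Φ : Matrix (Fin n) (Fin n) ℝ)
    (hΦ : 0 < Φ.det) :
    ∃ M₁ M₂ M₃ M₄ M₅ : Matrix (Fin n) (Fin n) ℝ,
      M₁.PosDef ∧ M₂.PosDef ∧ M₃.PosDef ∧ M₄.PosDef ∧ M₅.PosDef ∧
      Φ = M₅ * M₄ * M₃ * M₂ * M₁ :=
  factorization_into_five_posDef_general Φ hΦ
end

section
/- Every real orthogonal n×n matrix V with det V = 1 can be written as a product of five symmetric positive definite real n×n matrices. -/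
open Matrix

/-! Induct on the size of a matrix `A` of positive determinant, grouping the five factors as
`B * C * P` with `B` and `C` products of two positive definite matrices, a class closed under
similarity. A block triangular matrix with diagonal blocks `c • 1` and `B` is similar to the
corresponding block diagonal matrix as soon as `c` is not an eigenvalue of `B`. So if `A` has a
pivot `1` whose Schur complement is `B * C * P`, then `A` factors in the same way, with the pivots
`c`, `c⁻¹` and `1` on the three factors.

If the rest of the row of the pivot is nonzero, then a column operation makes the pivot `1`; it is
absorbed by the last factor, which only has to be positive definite and may be replaced by a
congruent matrix. Finally, a congruence of `A` makes the rest of that row nonzero. -/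

section Preliminaries

variable {R l m n : Type*}

/-- The lower unitriangular block matrix with off-diagonal block `X`, as a unit, so that one can
conjugate by it. -/
def lowerShear [Ring R] [Fintype m] [Fintype n] [DecidableEq m] [DecidableEq n]
    (X : Matrix n m R) : (Matrix (m ⊕ n) (m ⊕ n) R)ˣ where
  val := fromBlocks 1 0 X 1
  inv := fromBlocks 1 0 (-X) 1
  val_inv := by simp [fromBlocks_multiply]
  inv_val := by simp [fromBlocks_multiply]

/-- The upper unitriangular block matrix with off-diagonal block `Y`, as a unit, so that one can
conjugate by it. -/
def upperShear [Ring R] [Fintype m] [Fintype n] [DecidableEq m] [DecidableEq n]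
    (Y : Matrix m n R) : (Matrix (m ⊕ n) (m ⊕ n) R)ˣ where
  val := fromBlocks 1 Y 0 1
  inv := fromBlocks 1 (-Y) 0 1
  val_inv := by simp [fromBlocks_multiply]
  inv_val := by simp [fromBlocks_multiply]

theorem det_lowerShear [CommRing R] [Fintype m] [Fintype n] [DecidableEq m] [DecidableEq n]
    (X : Matrix n m R) : (lowerShear X).val.det = 1 := by
  simp [lowerShear]

theorem star_lowerShear [Ring R] [StarRing R] [Fintype m] [Fintype n] [DecidableEq m]
    [DecidableEq n] (X : Matrix n m R) : star (lowerShear X).val = fromBlocks 1 Xᴴ 0 1 := by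
  simp [lowerShear, star_eq_conjTranspose, fromBlocks_conjTranspose]

theorem exists_mul_eq_one_of_ne_zero [DivisionRing R] [Unique m] [DecidableEq m] [Fintype n]
    {b : Matrix m n R} (hb : b ≠ 0) : ∃ W : Matrix n m R, b * W = 1 := by
  classical
  obtain ⟨i, j, hij⟩ : ∃ i j, b i j ≠ 0 := by
    by_contra! h
    exact hb (Matrix.ext h)
  refine ⟨single j i (b i j)⁻¹, ?_⟩
  ext i' k
  rw [Subsingleton.elim i' i, Subsingleton.elim k i]
  simp [mul_inv_cancel₀ hij]

theorem exists_mul_conjTranspose_add_ne_zero [Ring R] [StarRing R] [Fintype m] [Nonempty n]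
    {a : Matrix l m R} {b : Matrix l n R} (hab : a ≠ 0 ∨ b ≠ 0) :
    ∃ V : Matrix n m R, a * Vᴴ + b ≠ 0 := by
  classical
  by_contra! h
  have hb : b = 0 := by simpa using h 0
  obtain ⟨j⟩ := ‹Nonempty n›
  have ha : a = 0 := by
    ext i k
    simpa [hb] using congrFun₂ (h (single j k 1)) i j
  simp [ha, hb] at hab

theorem isUnit_det_smul_one_sub [CommRing R] [Fintype n] [DecidableEq n] {B : Matrix n n R} {c : R}
    (hc : c ∉ spectrum R B) : IsUnit (c • 1 - B).det := by
  rwa [← isUnit_iff_isUnit_det, ← Algebra.algebraMap_eq_smul_one, ← spectrum.notMem_iff]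

theorem inv_pos_of_starOrderedRing [DivisionRing R] [PartialOrder R] [StarRing R]
    [StarOrderedRing R] {c : R} (hc : 0 < c) : 0 < c⁻¹ := by
  have h := star_left_conjugate_pos hc (IsRegular.of_ne_zero (inv_ne_zero hc.ne'))
  rwa [mul_assoc, mul_inv_cancel₀ hc.ne', mul_one, star_pos_iff] at h

theorem posDef_fromBlocks_zero_zero [Ring R] [PartialOrder R] [StarRing R] [AddLeftMono R]
    [Finite m] [Finite n] {P : Matrix m m R} {Q : Matrix n n R} (hP : P.PosDef) (hQ : Q.PosDef) :
    (fromBlocks P 0 0 Q).PosDef := by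
  cases nonempty_fintype m
  cases nonempty_fintype n
  refine .of_dotProduct_mulVec_pos
    (hP.isHermitian.fromBlocks (by simp) hQ.isHermitian) fun x hx ↦ ?_
  obtain ⟨u, v, rfl⟩ : ∃ u v, x = Sum.elim u v := ⟨_, _, (Sum.elim_comp_inl_inr x).symm⟩
  have hform : star (Sum.elim u v) ⬝ᵥ fromBlocks P 0 0 Q *ᵥ Sum.elim u v =
      star u ⬝ᵥ P *ᵥ u + star v ⬝ᵥ Q *ᵥ v := by
    simp [fromBlocks_mulVec, Function.star_sumElim]
  rw [hform]
  obtain rfl | hu := eq_or_ne u 0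
  · have hv : v ≠ 0 := by
      rintro rfl
      simp at hx
    simpa using hQ.dotProduct_mulVec_pos hv
  · exact add_pos_of_pos_of_nonneg (hP.dotProduct_mulVec_pos hu)
      (hQ.posSemidef.dotProduct_mulVec_nonneg v)

theorem posDef_of_subsingleton_of_det_pos [CommRing R] [NoZeroDivisors R] [PartialOrder R]
    [StarRing R] [StarOrderedRing R] [Fintype n] [DecidableEq n] [Subsingleton n] {A : Matrix n n R}
    (hA : 0 < A.det) : A.PosDef := by
  have hdiag : A = diagonal fun _ ↦ A.det := by
    ext i j
    rw [Subsingleton.elim j i, diagonal_apply_eq, det_eq_elem_of_subsingleton A i]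
  exact hdiag ▸ .diagonal fun _ ↦ hA

theorem exists_pos_notMem_spectrum {K : Type*} [Field K] [PartialOrder K] [StarRing K]
    [StarOrderedRing K] [Fintype n] [DecidableEq n] (B C : Matrix n n K) :
    ∃ c : K, 0 < c ∧ c ∉ spectrum K B ∧ c⁻¹ ∉ spectrum K C := by
  have hfin := B.finite_spectrum.union (C.finite_spectrum.preimage inv_injective.injOn)
  obtain ⟨c, hc, hc'⟩ := ((Set.Ioi_infinite (0 : K)).sdiff hfin).nonempty
  exact ⟨c, hc, by simpa using hc'⟩

end Preliminaries

/-- Being a product of two positive definite matrices. Over `ℝ` these are the diagonalizable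
matrices with positive eigenvalues. -/
def IsPosDefProductTwo {R n : Type*} [Ring R] [PartialOrder R] [StarRing R] [Fintype n]
    (B : Matrix n n R) : Prop :=
  ∃ P Q : Matrix n n R, P.PosDef ∧ Q.PosDef ∧ B = P * Q

namespace IsPosDefProductTwo

section Ring

variable {R m n : Type*} [Ring R] [PartialOrder R] [StarRing R] [Fintype m] [Fintype n]

theorem one [StarOrderedRing R] [NoZeroDivisors R] [DecidableEq n] :
    IsPosDefProductTwo (1 : Matrix n n R) :=
  ⟨1, 1, .one, .one, (one_mul 1).symm⟩

theorem submatrix {B : Matrix n n R} (hB : IsPosDefProductTwo B) (e : m ≃ n) :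
    IsPosDefProductTwo (B.submatrix e e) := by
  obtain ⟨P, Q, hP, hQ, rfl⟩ := hB
  exact ⟨_, _, hP.submatrix e.injective, hQ.submatrix e.injective,
    (submatrix_mul_equiv P Q e e e).symm⟩

theorem conj [DecidableEq n] {B : Matrix n n R} (hB : IsPosDefProductTwo B)
    (S : (Matrix n n R)ˣ) : IsPosDefProductTwo (S.val * B * S⁻¹.val) := by
  obtain ⟨P, Q, hP, hQ, rfl⟩ := hB
  have hcancel : star S.val * star S⁻¹.val = 1 := by rw [← star_mul, S.inv_mul, star_one]
  refine ⟨S.val * P * star S.val, star S⁻¹.val * Q * S⁻¹.val,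
    S.isUnit.posDef_star_right_conjugate_iff.2 hP,
    S⁻¹.isUnit.posDef_star_left_conjugate_iff.2 hQ, ?_⟩
  calc S.val * (P * Q) * S⁻¹.val = S.val * P * 1 * Q * S⁻¹.val := by
        simp only [mul_one, mul_assoc]
    _ = S.val * P * star S.val * (star S⁻¹.val * Q * S⁻¹.val) := by
        rw [← hcancel]
        simp only [mul_assoc]

end Ring

variable {K m n : Type*} [Field K] [PartialOrder K] [StarRing K] [StarOrderedRing K]
  [Fintype m] [Fintype n] [DecidableEq m] {B C : Matrix n n K} {c : K}

theorem fromBlocks_smul_one (hB : IsPosDefProductTwo B) (hc : 0 < c) :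
    IsPosDefProductTwo (fromBlocks (c • (1 : Matrix m m K)) 0 0 B) := by
  obtain ⟨P, Q, hP, hQ, rfl⟩ := hB
  exact ⟨_, _, posDef_fromBlocks_zero_zero (PosDef.one.smul hc) hP,
    posDef_fromBlocks_zero_zero .one hQ, by simp [fromBlocks_multiply]⟩

theorem fromBlocks_zero₁₂ [DecidableEq n] (hB : IsPosDefProductTwo B) (hc : 0 < c)
    (hcB : c ∉ spectrum K B) (X : Matrix n m K) :
    IsPosDefProductTwo (fromBlocks (c • 1) 0 X B) := by
  obtain ⟨Z, hZ⟩ : ∃ Z : Matrix n m K, (c • 1 - B) * Z = X :=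
    ⟨_, mul_nonsing_inv_cancel_left _ X (isUnit_det_smul_one_sub hcB)⟩
  have hX : X = c • Z - B * Z := by
    rw [← hZ, Matrix.sub_mul, Matrix.smul_mul, Matrix.one_mul]
  convert (hB.fromBlocks_smul_one hc).conj (lowerShear Z) using 1
  simp [lowerShear, fromBlocks_multiply, hX, sub_eq_add_neg]

theorem fromBlocks_zero₂₁ [DecidableEq n] (hB : IsPosDefProductTwo B) (hc : 0 < c)
    (hcB : c ∉ spectrum K B) (Y : Matrix m n K) :
    IsPosDefProductTwo (fromBlocks (c • 1) Y 0 B) := by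
  obtain ⟨Z, hZ⟩ : ∃ Z : Matrix m n K, Z * (c • 1 - B) = Y :=
    ⟨_, nonsing_inv_mul_cancel_right _ Y (isUnit_det_smul_one_sub hcB)⟩
  have hY : Y = c • Z - Z * B := by
    rw [← hZ, Matrix.mul_sub, Matrix.mul_smul, Matrix.mul_one]
  convert (hB.fromBlocks_smul_one hc).conj (upperShear (-Z)) using 1
  simp [upperShear, fromBlocks_multiply, hY, sub_eq_add_neg]

/-- The two factors have pivots `c` and `c⁻¹`, where `c` is chosen so that neither pivot is an
eigenvalue of the block below it. -/
theorem exists_mul_eq_fromBlocks_one (hB : IsPosDefProductTwo B) (hC : IsPosDefProductTwo C)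
    (X : Matrix n m K) (Y : Matrix m n K) :
    ∃ B' C' : Matrix (m ⊕ n) (m ⊕ n) K, IsPosDefProductTwo B' ∧ IsPosDefProductTwo C' ∧
      B' * C' = fromBlocks 1 Y X (X * Y + B * C) := by
  classical
  obtain ⟨c, hc, hcB, hcC⟩ := exists_pos_notMem_spectrum B C
  refine ⟨_, _, hB.fromBlocks_zero₁₂ hc hcB (c • X),
    hC.fromBlocks_zero₂₁ (inv_pos_of_starOrderedRing hc) hcC (c⁻¹ • Y), ?_⟩
  simp [fromBlocks_multiply, smul_smul, hc.ne']

end IsPosDefProductTwo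

/-- Being a product of five positive definite matrices. The factors are grouped as `2 + 2 + 1`
because under a congruence `S * _ * star S` the first two groups undergo a similarity and the last
factor a congruence. -/
def IsPosDefProductFive {R n : Type*} [Ring R] [PartialOrder R] [StarRing R] [Fintype n]
    (A : Matrix n n R) : Prop :=
  ∃ B C P : Matrix n n R,
    IsPosDefProductTwo B ∧ IsPosDefProductTwo C ∧ P.PosDef ∧ A = B * C * P

namespace IsPosDefProductFive

section Ring

variable {R m n : Type*} [Ring R] [PartialOrder R] [StarRing R] [Fintype m] [Fintype n]
  {A : Matrix n n R}

theorem of_posDef [StarOrderedRing R] [NoZeroDivisors R] (hA : A.PosDef) :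
    IsPosDefProductFive A := by
  classical
  exact ⟨1, 1, A, .one, .one, hA, by simp⟩

theorem submatrix (hA : IsPosDefProductFive A) (e : m ≃ n) :
    IsPosDefProductFive (A.submatrix e e) := by
  obtain ⟨B, C, P, hB, hC, hP, rfl⟩ := hA
  exact ⟨_, _, _, hB.submatrix e, hC.submatrix e, hP.submatrix e.injective,
    by simp only [submatrix_mul_equiv]⟩

theorem congr [DecidableEq n] (hA : IsPosDefProductFive A) (S : (Matrix n n R)ˣ) :
    IsPosDefProductFive (S.val * A * star S.val) := by
  obtain ⟨B, C, P, hB, hC, hP, rfl⟩ := hA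
  refine ⟨_, _, _, hB.conj S, hC.conj S, S.isUnit.posDef_star_right_conjugate_iff.2 hP, ?_⟩
  simp only [mul_assoc, Units.inv_mul_cancel_left]

theorem of_congr [DecidableEq n] (S : (Matrix n n R)ˣ)
    (hA : IsPosDefProductFive (S.val * A * star S.val)) : IsPosDefProductFive A := by
  have hcancel : star S.val * star S⁻¹.val = 1 := by rw [← star_mul, S.inv_mul, star_one]
  have h := hA.congr S⁻¹
  rwa [mul_assoc S.val, Units.inv_mul_cancel_left, mul_assoc, hcancel, mul_one] at h

end Ring

variable {K m n : Type*} [Field K] [PartialOrder K] [StarRing K] [StarOrderedRing K]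
  [Fintype m] [Fintype n] [DecidableEq m] [DecidableEq n]

theorem fromBlocks_one_mul_lowerShear {Y : Matrix m n K} {X : Matrix n m K} {D : Matrix n n K}
    (hschur : IsPosDefProductFive (D - X * Y)) (Z : Matrix n m K) :
    IsPosDefProductFive (fromBlocks 1 Y X D * (lowerShear Z).val) := by
  obtain ⟨B, C, P, hB, hC, hP, hBCP⟩ := hschur
  obtain ⟨B', C', hB', hC', hmul⟩ := hB.exists_mul_eq_fromBlocks_one hC X (Y * P⁻¹ - Zᴴ)
  refine ⟨B', C', star (lowerShear Z).val * fromBlocks 1 0 0 P * (lowerShear Z).val, hB', hC',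
    (lowerShear Z).isUnit.posDef_star_left_conjugate_iff.2
      (posDef_fromBlocks_zero_zero .one hP), ?_⟩
  have hY : Y * P⁻¹ * P = Y :=
    nonsing_inv_mul_cancel_right _ _ ((isUnit_iff_isUnit_det _).1 hP.isUnit)
  have hD : X * Y + B * C * P = D := by rw [← hBCP, add_sub_cancel]
  have hshear : B' * C' * star (lowerShear Z).val =
      fromBlocks 1 (Y * P⁻¹) X (X * (Y * P⁻¹) + B * C) := by
    rw [hmul, star_lowerShear]
    simp [fromBlocks_multiply, Matrix.mul_sub, ← add_assoc]
  have hscale : fromBlocks 1 (Y * P⁻¹) X (X * (Y * P⁻¹) + B * C) * fromBlocks 1 0 0 P =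
      fromBlocks 1 Y X D := by
    simp [fromBlocks_multiply, Matrix.add_mul, Matrix.mul_assoc X, hY, hD]
  rw [← hscale, ← hshear]
  simp only [mul_assoc]

variable [Unique m]

theorem fromBlocks_of_ne_zero (ih : ∀ A : Matrix n n K, 0 < A.det → IsPosDefProductFive A)
    {a : Matrix m m K} {b : Matrix m n K} {c : Matrix n m K} {D : Matrix n n K} (hb : b ≠ 0)
    (hdet : 0 < (fromBlocks a b c D).det) : IsPosDefProductFive (fromBlocks a b c D) := by
  obtain ⟨W, hW⟩ := exists_mul_eq_one_of_ne_zero hb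
  obtain ⟨Z, hZ⟩ : ∃ Z : Matrix n m K, 1 + b * Z = a :=
    ⟨W * (a - 1), by rw [← Matrix.mul_assoc, hW, Matrix.one_mul, add_sub_cancel]⟩
  have hfactor : fromBlocks a b c D = fromBlocks 1 b (c - D * Z) D * (lowerShear Z).val := by
    simp [lowerShear, fromBlocks_multiply, hZ]
  rw [hfactor] at hdet ⊢
  rw [det_mul, det_lowerShear, mul_one, det_fromBlocks_one₁₁] at hdet
  exact (ih _ hdet).fromBlocks_one_mul_lowerShear Z

theorem sum_of_det_pos [Nonempty n] (ih : ∀ A : Matrix n n K, 0 < A.det → IsPosDefProductFive A)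
    {A : Matrix (m ⊕ n) (m ⊕ n) K} (hA : 0 < A.det) : IsPosDefProductFive A := by
  obtain ⟨a, b, c, D, rfl⟩ : ∃ a b c D, A = fromBlocks a b c D :=
    ⟨_, _, _, _, (fromBlocks_toBlocks A).symm⟩
  have hrow : a ≠ 0 ∨ b ≠ 0 := by
    by_contra! h
    simp [h.1, h.2] at hA
  obtain ⟨V, hV⟩ := exists_mul_conjTranspose_add_ne_zero hrow
  have hcongr : (lowerShear V).val * fromBlocks a b c D * star (lowerShear V).val =
      fromBlocks a (a * Vᴴ + b) (V * a + c) ((V * a + c) * Vᴴ + (V * b + D)) := by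
    rw [star_lowerShear]
    simp [lowerShear, fromBlocks_multiply]
  have hdet : ((lowerShear V).val * fromBlocks a b c D * star (lowerShear V).val).det =
      (fromBlocks a b c D).det := by
    simp [star_eq_conjTranspose, det_lowerShear]
  refine of_congr (lowerShear V) ?_
  rw [← hdet, hcongr] at hA
  rw [hcongr]
  exact fromBlocks_of_ne_zero ih hV hA

theorem of_det_pos {A : Matrix n n K} (hA : 0 < A.det) : IsPosDefProductFive A := by
  suffices ∀ (α : Type _) [Finite α] [Fintype α] [DecidableEq α] (A : Matrix α α K),
      0 < A.det → IsPosDefProductFive A from this n A hA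
  intro α _
  induction α using Finite.induction_empty_option with
  | of_equiv e ih =>
    classical
    intro _ _ A hA
    have := Fintype.ofEquiv _ e.symm
    simpa using (ih (A.submatrix e e) (by rwa [det_submatrix_equiv_self])).submatrix e.symm
  | h_empty => exact fun A hA ↦ .of_posDef (posDef_of_subsingleton_of_det_pos hA)
  | @h_option α _ ih =>
    classical
    intro _ _ A hA
    obtain _ | _ := isEmpty_or_nonempty α
    · exact .of_posDef (posDef_of_subsingleton_of_det_pos hA)
    · let e : Unit ⊕ α ≃ Option α := (Equiv.sumComm _ _).trans (Equiv.optionEquivSumPUnit α).symm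
      have h : IsPosDefProductFive (A.submatrix e e) :=
        sum_of_det_pos ih (by rwa [det_submatrix_equiv_self])
      simpa using h.submatrix e.symm

end IsPosDefProductFive

theorem orthogonal_eq_product_of_five_posDef_general {K n : Type*} [Field K] [PartialOrder K]
    [StarRing K] [StarOrderedRing K] [Fintype n] [DecidableEq n] (A : Matrix n n K)
    (hA : 0 < A.det) :
    ∃ M₁ M₂ M₃ M₄ M₅ : Matrix n n K,
      M₁.PosDef ∧ M₂.PosDef ∧ M₃.PosDef ∧ M₄.PosDef ∧ M₅.PosDef ∧
      A = M₅ * M₄ * M₃ * M₂ * M₁ := by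
  obtain ⟨_, _, M₁, ⟨M₅, M₄, h₅, h₄, rfl⟩, ⟨M₃, M₂, h₃, h₂, rfl⟩, h₁, h⟩ :=
    IsPosDefProductFive.of_det_pos hA
  exact ⟨M₁, M₂, M₃, M₄, M₅, h₁, h₂, h₃, h₄, h₅, by simpa only [← mul_assoc] using h⟩

/-- Every real orthogonal `n × n` matrix `V` with `det V = 1` can be written as
a product of five symmetric positive definite real `n × n` matrices. -/
theorem orthogonal_eq_product_of_five_posDef {n : ℕ} (V : Matrix (Fin n) (Fin n) ℝ)
    (hV₁ : Vᵀ * V = 1) (hV₂ : V * Vᵀ = 1) (hdet : V.det = 1) :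
    ∃ M₁ M₂ M₃ M₄ M₅ : Matrix (Fin n) (Fin n) ℝ,
      M₁.PosDef ∧ M₂.PosDef ∧ M₃.PosDef ∧ M₄.PosDef ∧ M₅.PosDef ∧
      V = M₅ * M₄ * M₃ * M₂ * M₁ :=
  orthogonal_eq_product_of_five_posDef_general V (hdet ▸ one_pos)
end
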